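/- Let f : X → X' be a surjective homomorphism of KU-algebras, let d be a self map of X and d' a self map of X' such that f ∘ d = d' ∘ f. If β is a fuzzy left derivations KU-ideal of X' with respect to d', then the preimage μ = β ∘ f is a fuzzy left derivations KU-ideal of X with respect to d. -/

import Mathlib

/-- A KU-algebra: a set `X` with a binary operation `⋆` and a constant `𝟎` satisfying
(KU1) `(x⋆y)⋆((y⋆z)⋆(x⋆z)) = 𝟎`, (KU2) `x⋆𝟎 = 𝟎`, (KU3) `𝟎⋆x = x`,
(KU4) `x⋆y = 𝟎` and `y⋆x = 𝟎` imply `x = y`. -/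
class KUAlgebra (X : Type*) where
  star : X → X → X
  zero : X
  ku1 : ∀ x y z : X, star (star x y) (star (star y z) (star x z)) = zero
  ku2 : ∀ x : X, star x zero = zero
  ku3 : ∀ x : X, star zero x = x
  ku4 : ∀ x y : X, star x y = zero → star y x = zero → x = y

infixl:70 " ⋆ " => KUAlgebra.star
notation "𝟎" => KUAlgebra.zero

/-- The order `x ≤ y ↔ y ⋆ x = 𝟎` on a KU-algebra. -/
def KUle {X : Type*} [KUAlgebra X] (x y : X) : Prop := y ⋆ x = 𝟎

/-- `x ∧ y := (x ⋆ y) ⋆ y` in a KU-algebra. -/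
def KUwedge {X : Type*} [KUAlgebra X] (x y : X) : X := (x ⋆ y) ⋆ y

/-- An (ℓ,r)-derivation: `d(x⋆y) = (d(x)⋆y) ∧ (x⋆d(y))`. -/
def IsLRDeriv {X : Type*} [KUAlgebra X] (d : X → X) : Prop :=
  ∀ x y : X, d (x ⋆ y) = KUwedge (d x ⋆ y) (x ⋆ d y)

/-- An (r,ℓ)-derivation: `d(x⋆y) = (x⋆d(y)) ∧ (d(x)⋆y)`. -/
def IsRLDeriv {X : Type*} [KUAlgebra X] (d : X → X) : Prop :=
  ∀ x y : X, d (x ⋆ y) = KUwedge (x ⋆ d y) (d x ⋆ y)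

/-- A derivation is both an (ℓ,r)- and an (r,ℓ)-derivation. -/
def IsDeriv {X : Type*} [KUAlgebra X] (d : X → X) : Prop := IsLRDeriv d ∧ IsRLDeriv d

/-- A fuzzy left derivations KU-ideal of `X` with respect to a self map `d`:
a fuzzy set `μ : X → [0,1]` with `μ 𝟎 ≥ μ x` and
`μ (d (x ⋆ z)) ≥ min (μ (d x ⋆ (y ⋆ z))) (μ (d y))`. -/
def IsFuzzyLeftDerivKUIdeal {X : Type*} [KUAlgebra X] (d : X → X) (μ : X → ℝ) : Prop :=
  (∀ x : X, μ x ∈ Set.Icc (0 : ℝ) 1) ∧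
  (∀ x : X, μ 𝟎 ≥ μ x) ∧
  (∀ x y z : X, μ (d (x ⋆ z)) ≥ min (μ (d x ⋆ (y ⋆ z))) (μ (d y)))

/-- A fuzzy right derivations KU-ideal of `X` with respect to a self map `d`:
a fuzzy set `μ : X → [0,1]` with `μ 𝟎 ≥ μ x` and
`μ (d (x ⋆ z)) ≥ min (μ (x ⋆ d (y ⋆ z))) (μ (d y))`. -/
def IsFuzzyRightDerivKUIdeal {X : Type*} [KUAlgebra X] (d : X → X) (μ : X → ℝ) : Prop :=
  (∀ x : X, μ x ∈ Set.Icc (0 : ℝ) 1) ∧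
  (∀ x : X, μ 𝟎 ≥ μ x) ∧
  (∀ x y z : X, μ (d (x ⋆ z)) ≥ min (μ (x ⋆ d (y ⋆ z))) (μ (d y)))

/-- A fuzzy set `μ` has the sup property if every nonempty subset `T` contains a point
at which `μ` attains `sup_{t ∈ T} μ t`. -/
def SupProperty {X : Type*} (μ : X → ℝ) : Prop :=
  ∀ T : Set X, T.Nonempty → ∃ t₀ ∈ T, μ t₀ = sSup (μ '' T)

open Classical in
/-- The image of a fuzzy set `μ` under `f`: `f(μ)(y) = sup {μ x : f x = y}` when the
preimage of `y` is nonempty, and `0` otherwise. -/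
noncomputable def fuzzyImage {X Y : Type*} (f : X → Y) (μ : X → ℝ) : Y → ℝ :=
  fun y => if (f ⁻¹' {y}).Nonempty then sSup (μ '' (f ⁻¹' {y})) else 0

/-- The preimage `β ∘ f` of a fuzzy left derivations KU-ideal `β` under a surjective
KU-algebra homomorphism `f` intertwining `d` and `d'` is a fuzzy left derivations
KU-ideal. -/
theorem preimage_fuzzy_left_deriv_ideal {X X' : Type*} [KUAlgebra X] [KUAlgebra X']
    (f : X → X') (hsurj : Function.Surjective f)
    (hhom : ∀ a b : X, f (a ⋆ b) = f a ⋆ f b)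
    (d : X → X) (d' : X' → X') (hcomm : ∀ x : X, f (d x) = d' (f x))
    (β : X' → ℝ) (hβ : IsFuzzyLeftDerivKUIdeal d' β) :
    IsFuzzyLeftDerivKUIdeal d (β ∘ f) := by
  -- `f 𝟎 = f (𝟎 ⋆ 𝟎) = f 𝟎 ⋆ f 𝟎`, and `a ⋆ a = 𝟎` is KU1 at `x = y = 𝟎`, `z = a`.
  have hself : ∀ a : X', a ⋆ a = 𝟎 := fun a => by
    simpa only [KUAlgebra.ku3] using KUAlgebra.ku1 (𝟎 : X') 𝟎 a
  have hzero : f 𝟎 = 𝟎 := by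
    rw [← hself (f 𝟎), ← hhom, KUAlgebra.ku2]
  obtain ⟨hI, h0, hd⟩ := hβ
  refine ⟨fun x => hI (f x), fun x => ?_, fun x y z => ?_⟩
  · simpa only [Function.comp_apply, hzero] using h0 (f x)
  · simpa only [Function.comp_apply, hcomm, hhom] using hd (f x) (f y) (f z)
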